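/- Define the tower of ω's by ω₀ := 1 and ω_(n+1) := ω^(ω_n). Then for every natural number n we have ω_(n+1) ↘₁ ω_n + 1. -/

import Mathlib

/-!
Below, `↘` is `↘ₙ` for a fixed `n`. Three facts about arbitrary notations carry the proof:

* `Step.oadd`: a descent `a ↘ b` may be carried out in the last summand of `γ + a`;
* `step_zero`: every notation descends to `0`. This follows by structural induction, the case
  of `ω^e·m` being an induction on the length of the descent of `e` (no normal form or
  well-foundedness argument is needed);
* `Step.omega_pow`: `α ↘ β` implies `ω^α ↘ ω^β`, because `ω^(γ+1)` steps to `ω^γ·(n+1)`, from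
  which the extra copies of `ω^γ` can be removed by `step_zero`.

The theorem follows by induction. From `ω_(n+1) ↘₁ ω_n + 1` one obtains
`ω_(n+2) ↘₁ ω^(ω_n + 1) ↘₁ ω^(ω_n)·2 = ω_(n+1) + ω_(n+1)`, and the last summand descends to `1`
since `ω_n ↘₁ 0` gives `ω_(n+1) = ω^(ω_n) ↘₁ ω^0 = 1`.
-/

namespace Paper

/-- `pred? o = some β` when the notation `o` denotes a successor ordinal `β + 1`;
`pred? o = none` when `o` denotes `0` or a limit ordinal. -/
def pred? : ONote → Option ONote
  | ONote.zero => none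
  | ONote.oadd e m a =>
    match a with
    | ONote.oadd e' m' a' => (pred? (ONote.oadd e' m' a')).map (ONote.oadd e m)
    | ONote.zero => if e = 0 then some (ONote.ofNat ((m : ℕ) - 1)) else none

/-- The fundamental sequence: `fs α n` is `{α}(n)`.  We have `{0}(n) = 0`,
`{β+1}(n) = β`, `{γ + ω^(δ+1)}(n) = γ + ω^δ·(n+1)` and `{γ + ω^δ}(n) = γ + ω^({δ}(n))`
for `δ` a limit. -/
def fs : ONote → ℕ → ONote
  | ONote.zero, _ => ONote.zero
  | ONote.oadd e m a, n =>
    match a with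
    | ONote.oadd e' m' a' => ONote.oadd e m (fs (ONote.oadd e' m' a') n)
    | ONote.zero =>
      match e with
      | ONote.zero => ONote.ofNat ((m : ℕ) - 1)
      | ONote.oadd e1 m1 a1 =>
        let tail : ONote :=
          match pred? (ONote.oadd e1 m1 a1) with
          | some p => ONote.oadd p ⟨n + 1, n.succ_pos⟩ ONote.zero
          | none => ONote.oadd (fs (ONote.oadd e1 m1 a1) n) 1 ONote.zero
        if (m : ℕ) = 1 then tail
        else ONote.oadd (ONote.oadd e1 m1 a1) ⟨max ((m : ℕ) - 1) 1, by omega⟩ tail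

/-- Iteration of the fundamental sequence: `fund α n x` applies `{·}(n)` to `α`, `x` times. -/
def fund (α : ONote) (n : ℕ) : ℕ → ONote
  | 0 => α
  | x + 1 => fs (fund α n x) n

/-- `StepAt α n x β` expresses `α ↘ₙˣ β`: some `y ≤ x` has `fund α n y = β`. -/
def StepAt (α : ONote) (n x : ℕ) (β : ONote) : Prop :=
  ∃ y ≤ x, fund α n y = β

/-- `Step α n β` expresses `α ↘ₙ β`. -/
def Step (α : ONote) (n : ℕ) (β : ONote) : Prop :=
  ∃ x, StepAt α n x β


/-- The tower of `ω`'s: `ω₀ = 1` and `ω_(n+1) = ω^(ω_n)`. -/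
def wtower : ℕ → ONote
  | 0 => 1
  | n + 1 => ONote.oadd (wtower n) 1 0

theorem step_iff {α β : ONote} {n : ℕ} : Step α n β ↔ ∃ y, fund α n y = β :=
  ⟨fun ⟨_, y, _, h⟩ => ⟨y, h⟩, fun ⟨y, h⟩ => ⟨y, y, le_rfl, h⟩⟩

theorem fund_succ_left (α : ONote) (n y : ℕ) : fund α n (y + 1) = fund (fs α n) n y := by
  induction y with
  | zero => rfl
  | succ y ih => rw [fund, ih, fund]

theorem fund_add (α : ONote) (n x y : ℕ) : fund α n (x + y) = fund (fund α n x) n y := by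
  induction y with
  | zero => rfl
  | succ y ih => rw [← add_assoc, fund, ih, fund]

theorem fund_zero (n y : ℕ) : fund 0 n y = 0 := by
  induction y with
  | zero => rfl
  | succ y ih => rw [fund, ih]; rfl

theorem Step.refl (α : ONote) (n : ℕ) : Step α n α := step_iff.2 ⟨0, rfl⟩

theorem Step.trans {α β γ : ONote} {n : ℕ} (h₁ : Step α n β) (h₂ : Step β n γ) :
    Step α n γ := by
  obtain ⟨x, rfl⟩ := step_iff.1 h₁
  obtain ⟨y, rfl⟩ := step_iff.1 h₂
  exact step_iff.2 ⟨x + y, fund_add ..⟩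

theorem Step.head {α β : ONote} {n : ℕ} (h : Step (fs α n) n β) : Step α n β := by
  obtain ⟨y, rfl⟩ := step_iff.1 h
  exact step_iff.2 ⟨y + 1, fund_succ_left ..⟩

/-- A descent with at least one step passes through `{α}(n)`. -/
theorem Step.tail_of_ne {α β : ONote} {n : ℕ} (h : Step α n β) (hne : β ≠ α) :
    Step (fs α n) n β := by
  obtain ⟨_ | y, rfl⟩ := step_iff.1 h
  · exact absurd rfl hne
  · exact step_iff.2 ⟨y, (fund_succ_left ..).symm⟩

theorem fs_oadd {a : ONote} (ha : a ≠ 0) (e : ONote) (m : ℕ+) (n : ℕ) :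
    fs (.oadd e m a) n = .oadd e m (fs a n) := by
  cases a with
  | zero => exact absurd rfl ha
  | oadd e' m' a' => rw [fs]

/-- Descents take place in the last summand: `a ↘ b` implies `ω^e·m + a ↘ ω^e·m + b`. -/
theorem Step.oadd {a b : ONote} {n : ℕ} (h : Step a n b) (e : ONote) (m : ℕ+) :
    Step (.oadd e m a) n (.oadd e m b) := by
  obtain ⟨y, rfl⟩ := step_iff.1 h
  clear h
  induction y generalizing a with
  | zero => exact .refl _ _
  | succ y ih =>
    by_cases ha : a = 0
    · subst ha; rw [fund_zero]; exact .refl _ _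
    · refine .head ?_
      rw [fs_oadd ha, fund_succ_left]
      exact ih

theorem fs_eq_of_pred {α p : ONote} {n : ℕ} (h : pred? α = some p) : fs α n = p := by
  induction α generalizing p with
  | zero => simp [pred?] at h
  | oadd e m a _ iha =>
    cases a with
    | zero =>
      rw [pred?] at h
      split_ifs at h with he
      subst he
      exact Option.some.inj h
    | oadd e' m' a' =>
      rw [pred?, Option.map_eq_some_iff] at h
      obtain ⟨q, hq, rfl⟩ := h
      rw [fs, iha hq]

/-- In both cases of the definition, `{ω^e}(n)` is a multiple of `ω^({e}(n))`. -/
theorem fs_omega_pow {e : ONote} (he : e ≠ 0) (n : ℕ) :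
    (pred? e = none ∧ fs (.oadd e 1 0) n = .oadd (fs e n) 1 0) ∨
      ((pred? e).isSome ∧ fs (.oadd e 1 0) n = .oadd (fs e n) ⟨n + 1, n.succ_pos⟩ 0) := by
  cases e with
  | zero => exact absurd rfl he
  | oadd e1 m1 a1 =>
    change (_ ∧ fs (.oadd _ 1 .zero) n = _) ∨ (_ ∧ fs (.oadd _ 1 .zero) n = _)
    cases hp : pred? (.oadd e1 m1 a1) with
    | none => left; simp [fs, hp]
    | some p => right; rw [fs_eq_of_pred hp]; simp [fs, hp]

theorem fs_mul_succ {e : ONote} (he : e ≠ 0) (m : ℕ+) (n : ℕ) :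
    fs (.oadd e (m + 1) 0) n = .oadd e m (fs (.oadd e 1 0) n) := by
  cases e with
  | zero => exact absurd rfl he
  | oadd e1 m1 a1 =>
    change fs (.oadd _ _ .zero) n = .oadd _ _ (fs (.oadd _ 1 .zero) n)
    have h1 : ((m + 1 : ℕ+) : ℕ) ≠ 1 := by simp
    have h2 : (⟨max (((m + 1 : ℕ+) : ℕ) - 1) 1, by omega⟩ : ℕ+) = m := by
      apply PNat.eq
      have := m.pos
      simp
      omega
    rw [fs, fs, if_neg h1, h2]
    simp

theorem step_mul_succ {e β : ONote} {m : ℕ+} {n : ℕ} (he : e ≠ 0)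
    (h : Step (.oadd e 1 0) n β) (hne : β ≠ .oadd e 1 0) :
    Step (.oadd e (m + 1) 0) n (.oadd e m β) := by
  refine .head ?_
  rw [fs_mul_succ he]
  exact (h.tail_of_ne hne).oadd e m

theorem fs_nat_succ (m : ℕ+) (n : ℕ) : fs (.oadd 0 (m + 1) 0) n = .oadd 0 m 0 := by
  change ONote.ofNat (((m + 1 : ℕ+) : ℕ) - 1) = _
  obtain ⟨k, rfl⟩ : ∃ k, m = Nat.succPNat k := ⟨_, (PNat.succPNat_natPred m).symm⟩
  rfl

/-- If the exponent `e` descends to `0`, so does every multiple of `ω^e`, by induction on the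
length of the descent of `e`. -/
theorem step_zero_mul {e : ONote} {n y : ℕ} (h : fund e n y = 0) (m : ℕ+) :
    Step (.oadd e m 0) n 0 := by
  induction y generalizing e m with
  | zero =>
    obtain rfl : e = 0 := h
    induction m using PNat.recOn with
    | one => exact .head (.refl _ _)
    | succ m ih => refine .head ?_; rwa [fs_nat_succ]
  | succ y ihy =>
    rw [fund_succ_left] at h
    by_cases he : e = 0
    · subst he; exact ihy (fund_zero ..) m
    have h1 : Step (.oadd e 1 0) n 0 := by
      refine .head ?_
      rcases fs_omega_pow he n with ⟨-, hs⟩ | ⟨-, hs⟩ <;> rw [hs] <;> exact ihy h _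
    induction m using PNat.recOn with
    | one => exact h1
    | succ m ih => exact (step_mul_succ he h1 nofun).trans ih

theorem step_zero (α : ONote) (n : ℕ) : Step α n 0 := by
  induction α with
  | zero => exact .refl _ _
  | oadd e m a ihe iha =>
    obtain ⟨y, hy⟩ := step_iff.1 ihe
    exact (iha.oadd e m).trans (step_zero_mul hy m)

theorem step_mul_one (e : ONote) (m : ℕ+) (n : ℕ) : Step (.oadd e m 0) n (.oadd e 1 0) := by
  induction m using PNat.recOn with
  | one => exact .refl _ _
  | succ m ih =>
    refine Step.trans ?_ ih
    by_cases he : e = 0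
    · subst he; refine .head ?_; rw [fs_nat_succ]; exact .refl _ _
    · exact step_mul_succ he (step_zero _ _) nofun

/-- Descents lift to exponents: `α ↘ β` implies `ω^α ↘ ω^β`. At a successor exponent the first
step yields `ω^γ·(n+1)`, and the superfluous copies of `ω^γ` are then removed. -/
theorem Step.omega_pow {α β : ONote} {n : ℕ} (h : Step α n β) :
    Step (.oadd α 1 0) n (.oadd β 1 0) := by
  obtain ⟨y, rfl⟩ := step_iff.1 h
  clear h
  induction y generalizing α with
  | zero => exact .refl _ _
  | succ y ih =>
    by_cases hα : α = 0
    · subst hα; rw [fund_zero]; exact .refl _ _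
    · rw [fund_succ_left]
      refine Step.trans (.head ?_) ih
      rcases fs_omega_pow hα n with ⟨-, h⟩ | ⟨-, h⟩ <;> rw [h] <;> exact step_mul_one ..

theorem wtower_ne_zero (n : ℕ) : wtower n ≠ 0 := by
  cases n <;> exact nofun

theorem wtower_succ_add_one (n : ℕ) : wtower (n + 1) + 1 = .oadd (wtower n) 1 1 := by
  cases n <;> rfl

theorem pred_wtower_add_one (n : ℕ) : pred? (wtower n + 1) = some (wtower n) := by
  cases n with
  | zero => decide
  | succ n => rw [wtower_succ_add_one]; rfl

/-- For every `n` we have `ω_(n+1) ↘₁ ω_n + 1`. -/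
theorem step_wtower (n : ℕ) : Step (wtower (n + 1)) 1 (wtower n + 1) := by
  induction n with
  | zero => exact ⟨1, 1, le_rfl, by decide⟩
  | succ n ih =>
    refine (Step.omega_pow ih).trans ?_
    have hne : wtower n + 1 ≠ 0 := by
      intro h
      have := pred_wtower_add_one n
      rw [h] at this
      cases this
    have hfs : fs (.oadd (wtower n + 1) 1 0) 1 = .oadd (wtower n) 2 0 := by
      rcases fs_omega_pow hne 1 with ⟨h, _⟩ | h
      · rw [pred_wtower_add_one] at h; cases h
      · rw [h.2, fs_eq_of_pred (pred_wtower_add_one n)]; rfl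
    refine .head ?_
    rw [hfs, wtower_succ_add_one]
    -- It remains to see `ω_(n+1)·2 ↘ ω_(n+1) + 1`, which holds since `ω_(n+1) ↘ 1 = ω^0`.
    have h1 : Step (.oadd (wtower n) 1 0) 1 1 := (step_zero (wtower n) 1).omega_pow
    refine step_mul_succ (m := 1) (wtower_ne_zero n) h1 ?_
    intro h
    exact wtower_ne_zero n (by injection h.symm)

end Paper
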